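/- (Extremal correlation of the Type-2 Gumbel mixture.) For every b > 0 and every t ≥ 0, ∫_0^∞ 2(1 − Φ(s·t)) · 2b s^{−3} e^{−b/s²} ds = e^{−t√(2b)}. In particular, for b = 1 and t = √g this gives ∫_0^∞ 2(1 − Φ(s√g)) · 2 s^{−3} e^{−1/s²} ds = e^{−√(2g)} for all g ≥ 0. -/

import Mathlib

open MeasureTheory Filter Real Set

/-- Standard normal density. -/
noncomputable def stdPdf (t : ℝ) : ℝ := (Real.sqrt (2 * Real.pi))⁻¹ * Real.exp (-(t ^ 2) / 2)

/-- Standard normal CDF. -/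
noncomputable def stdCdf (x : ℝ) : ℝ := ∫ t in Set.Iic x, stdPdf t

open Topology ProbabilityTheory

lemma stdPdf_eq (x : ℝ) : stdPdf x = gaussianPDFReal 0 1 x := by
  simp [stdPdf, gaussianPDFReal]

lemma stdPdf_integrable : Integrable stdPdf := by
  have h : stdPdf = gaussianPDFReal 0 1 := funext stdPdf_eq
  rw [h]; exact integrable_gaussianPDFReal 0 1

lemma stdCdf_eq (x : ℝ) : stdCdf x = cdf (gaussianReal 0 1) x := by
  rw [cdf_eq_real, measureReal_def, gaussianReal_apply_eq_integral 0 one_ne_zero, ENNReal.toReal_ofReal]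
  · simp [stdCdf, stdPdf_eq]
  · exact integral_nonneg fun x => gaussianPDFReal_nonneg 0 1 x

lemma stdCdf_top : Tendsto stdCdf atTop (𝓝 1) := by
  rw [funext stdCdf_eq]; exact tendsto_cdf_atTop _

lemma stdCdf_bot : Tendsto stdCdf atBot (𝓝 0) := by
  rw [funext stdCdf_eq]; exact tendsto_cdf_atBot _

lemma stdCdf_le (x : ℝ) : stdCdf x ≤ 1 := by
  rw [stdCdf_eq]; exact cdf_le_one _ _

lemma stdPdf_cont : Continuous stdPdf := by
  unfold stdPdf; fun_prop

lemma stdCdf_deriv (x : ℝ) : HasDerivAt stdCdf (stdPdf x) x := by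
  have h : stdCdf = fun y => stdCdf 0 + ∫ t in (0:ℝ)..y, stdPdf t := by
    funext y
    rw [← intervalIntegral.integral_Iic_sub_Iic stdPdf_integrable.integrableOn
      stdPdf_integrable.integrableOn]
    simp [stdCdf]
  rw [h]
  exact (intervalIntegral.integral_hasDerivAt_right (stdPdf_cont.intervalIntegrable _ _)
    stdPdf_cont.stronglyMeasurable.stronglyMeasurableAtFilter stdPdf_cont.continuousAt).const_add _

noncomputable def GG (b t c s : ℝ) : ℝ :=
  2 * (1 - stdCdf (s * t)) * Real.exp (-b / s ^ 2) +
    (Real.exp (t * c) * stdCdf (s * t + c / s) + Real.exp (-(t * c)) * stdCdf (s * t - c / s))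

lemma GG_fun (b t c : ℝ) : GG b t c = fun s =>
  2 * (1 - stdCdf (s * t)) * Real.exp (-b / s ^ 2) +
    (Real.exp (t * c) * stdCdf (s * t + c / s) + Real.exp (-(t * c)) * stdCdf (s * t - c / s)) :=
  rfl

lemma pdf_plus {b t c s : ℝ} (hc : c ^ 2 = 2 * b) (hs : s ≠ 0) :
    Real.exp (t * c) * stdPdf (s * t + c / s) = stdPdf (s * t) * Real.exp (-b / s ^ 2) := by
  have hb : b = c ^ 2 / 2 := by linarith
  unfold stdPdf
  rw [mul_left_comm, mul_assoc, ← Real.exp_add, ← Real.exp_add, hb]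
  congr 2
  field_simp
  ring

lemma GG_deriv {b t c s : ℝ} (hc : c ^ 2 = 2 * b) (hs : 0 < s) :
    HasDerivAt (GG b t c)
      (2 * (1 - stdCdf (s * t)) * (2 * b * s ^ (-3 : ℤ) * Real.exp (-b / s ^ 2))) s := by
  have hs' := hs.ne'
  have h1 : HasDerivAt (fun s : ℝ => s * t) t s := by simpa using (hasDerivAt_id s).mul_const t
  have h2 : HasDerivAt (fun s : ℝ => c / s) (-c / s ^ 2) s := by
    have := (hasDerivAt_const s c).div (hasDerivAt_id s) hs'
    exact this.congr_deriv (by simp)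
  have h3 : HasDerivAt (fun s : ℝ => -b / s ^ 2) (2 * b * s ^ (-3 : ℤ)) s := by
    have := (hasDerivAt_const s (-b)).div (hasDerivAt_pow 2 s) (pow_ne_zero 2 hs')
    refine this.congr_deriv ?_
    simp only [zpow_neg]
    norm_cast
    field_simp
    simp
    ring
  have hA := ((((stdCdf_deriv (s * t)).comp s h1).const_sub 1).const_mul 2).mul h3.exp
  have hB := ((stdCdf_deriv (s * t + c / s)).comp s (h1.add h2)).const_mul (Real.exp (t * c))
  have hC := ((stdCdf_deriv (s * t - c / s)).comp s (h1.sub h2)).const_mul (Real.exp (-(t * c)))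
  have hD := hA.add (hB.add hC)
  have e1 := pdf_plus (t := t) hc hs'
  have e2 := pdf_plus (b := b) (t := t) (c := -c) (s := s) (by rw [neg_sq, hc]) hs'
  rw [mul_neg, neg_div, ← sub_eq_add_neg] at e2
  refine hD.congr_deriv ?_
  simp only [Function.comp]
  linear_combination (t + -c / s ^ 2) * e1 + (t - -c / s ^ 2) * e2

lemma GG_zero {b t c : ℝ} (hb : 0 < b) (hc : 0 < c) :
    Tendsto (GG b t c) (𝓝[>] 0) (𝓝 (Real.exp (t * c))) := by
  have hinv : Tendsto (fun s : ℝ => s⁻¹) (𝓝[>] 0) atTop := tendsto_inv_nhdsGT_zero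
  have h1 : Tendsto (fun s : ℝ => s * t) (𝓝[>] 0) (𝓝 0) := by
    have : Continuous fun s : ℝ => s * t := by fun_prop
    simpa using (this.tendsto 0).mono_left nhdsWithin_le_nhds
  have h2 : Tendsto (fun s : ℝ => c / s) (𝓝[>] 0) atTop := by
    simpa [div_eq_mul_inv] using hinv.const_mul_atTop hc
  have h3 : Tendsto (fun s : ℝ => Real.exp (-b / s ^ 2)) (𝓝[>] 0) (𝓝 0) := by
    refine Real.tendsto_exp_atBot.comp ?_
    have := ((tendsto_pow_atTop (two_ne_zero)).comp hinv).const_mul_atTop_of_neg (neg_lt_zero.2 hb)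
    simpa [div_eq_mul_inv, Function.comp_def] using this
  have h4 : Tendsto (fun s : ℝ => stdCdf (s * t)) (𝓝[>] 0) (𝓝 (stdCdf 0)) :=
    ((stdCdf_deriv 0).continuousAt.tendsto).comp h1
  have h5 := stdCdf_top.comp (h1.add_atTop h2)
  have h6 := stdCdf_bot.comp (h1.add_atBot (tendsto_neg_atTop_atBot.comp h2))
  have := (((h4.const_sub 1).const_mul 2).mul h3).add
    ((h5.const_mul (Real.exp (t * c))).add (h6.const_mul (Real.exp (-(t * c)))))
  simpa [GG_fun, Function.comp_def, sub_eq_add_neg] using this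

lemma GG_top {b t c : ℝ} (ht : 0 ≤ t) :
    Tendsto (GG b t c) atTop (𝓝 (Real.exp (t * c) + Real.exp (-(t * c)))) := by
  have h2 : Tendsto (fun s : ℝ => c / s) atTop (𝓝 0) := tendsto_const_nhds.div_atTop tendsto_id
  have h3 : Tendsto (fun s : ℝ => Real.exp (-b / s ^ 2)) atTop (𝓝 1) := by
    have : Tendsto (fun s : ℝ => -b / s ^ 2) atTop (𝓝 0) :=
      tendsto_const_nhds.div_atTop (tendsto_pow_atTop two_ne_zero)
    simpa [Function.comp_def] using (Real.continuous_exp.tendsto 0).comp this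
  have hc2 : Tendsto (fun s : ℝ => - (c / s)) atTop (𝓝 0) := by simpa using h2.neg
  rcases ht.eq_or_lt with rfl | ht
  · have h0 := (stdCdf_deriv 0).continuousAt.tendsto
    have := (h3.const_mul (2 * (1 - stdCdf 0))).add ((h0.comp h2).add (h0.comp hc2))
    have e : 2 * (1 - stdCdf 0) * 1 + (stdCdf 0 + stdCdf 0) = 1 + 1 := by ring
    rw [e] at this
    simpa [GG_fun, Function.comp_def] using this
  · have h1 : Tendsto (fun s : ℝ => s * t) atTop atTop := tendsto_id.atTop_mul_const ht
    have h4 := stdCdf_top.comp h1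
    have h5 := stdCdf_top.comp (h1.atTop_add h2)
    have h6 := stdCdf_top.comp (h1.atTop_add hc2)
    have := (((h4.const_sub 1).const_mul 2).mul h3).add
      ((h5.const_mul (Real.exp (t * c))).add (h6.const_mul (Real.exp (-(t * c)))))
    simpa [GG_fun, Function.comp_def, sub_eq_add_neg] using this

lemma main_part (b : ℝ) (hb : 0 < b) (t : ℝ) (ht : 0 ≤ t) :
      ∫ s in Set.Ioi (0 : ℝ),
          2 * (1 - stdCdf (s * t)) * (2 * b * s ^ (-3 : ℤ) * Real.exp (-b / s ^ 2))
        = Real.exp (-(t * Real.sqrt (2 * b))) := by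
  set c := Real.sqrt (2 * b) with hcdef
  have hc : 0 < c := Real.sqrt_pos.2 (by linarith)
  have hc2 : c ^ 2 = 2 * b := Real.sq_sqrt (by linarith)
  have key := integral_Ioi_of_hasDerivAt_of_nonneg (a := (0:ℝ))
    (g := Function.update (GG b t c) 0 (Real.exp (t * c)))
    (g' := fun s => 2 * (1 - stdCdf (s * t)) * (2 * b * s ^ (-3 : ℤ) * Real.exp (-b / s ^ 2)))
    (l := Real.exp (t * c) + Real.exp (-(t * c))) ?_ ?_ ?_ ?_
  · rw [key]; simp
  · rw [continuousWithinAt_update_same]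
    simpa using GG_zero hb hc
  · intro x hx
    have hx : 0 < x := hx
    refine (GG_deriv hc2 hx).congr_of_eventuallyEq ?_
    filter_upwards [isOpen_ne.mem_nhds hx.ne'] with y hy
    exact Function.update_of_ne hy _ _
  · intro x hx
    have hx : 0 < x := hx
    have := stdCdf_le (x * t)
    have : 0 ≤ 1 - stdCdf (x * t) := by linarith
    positivity
  · refine (GG_top (b := b) ht).congr' ?_
    filter_upwards [eventually_ne_atTop 0] with y hy
    exact (Function.update_of_ne hy _ _).symm

/-- **Extremal correlation of the Type-2 Gumbel mixture.** -/
theorem stmt19 :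
    (∀ b : ℝ, 0 < b → ∀ t : ℝ, 0 ≤ t →
      ∫ s in Set.Ioi (0 : ℝ),
          2 * (1 - stdCdf (s * t)) * (2 * b * s ^ (-3 : ℤ) * Real.exp (-b / s ^ 2))
        = Real.exp (-(t * Real.sqrt (2 * b))))
    ∧ ∀ g : ℝ, 0 ≤ g →
      ∫ s in Set.Ioi (0 : ℝ),
          2 * (1 - stdCdf (s * Real.sqrt g)) * (2 * s ^ (-3 : ℤ) * Real.exp (-1 / s ^ 2))
        = Real.exp (-Real.sqrt (2 * g)) := by
  refine ⟨main_part, fun g hg => ?_⟩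
  have := main_part 1 one_pos (Real.sqrt g) (Real.sqrt_nonneg g)
  rw [← Real.sqrt_mul hg] at this
  simpa only [mul_one, mul_comm g 2] using this
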